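/- arXiv:2012.02079 — 3 statements merged into one kernel-verified Lean document; each statement's English description precedes it below -/
import Mathlib

section
/- For every a ∈ (−π, π), the principal-value integral of q · cot((q−a)/2) over [−π, π] exists and equals 4π · log(2 cos(a/2)); precisely, the limit as ε → 0⁺ of [∫_{−π}^{a−ε} q cot((q−a)/2) dq + ∫_{a+ε}^{π} q cot((q−a)/2) dq] exists and equals 4π log(2 cos(a/2)). -/
/-!
Put `g q = log |sin ((q - a) / 2)|`, so that `2 g' = cot ((q - a) / 2)`. Integration by parts on an
interval avoiding the zeros of the sine (`integral_mul_cot`) turns each regularized integral into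
boundary terms `2 q g q` minus `2 ∫ g`. At `a ± ε` the function `g` takes the same value
`log (sin (ε / 2))`, so these boundary terms combine to `-4 ε log (sin (ε / 2))`, which tends to `0`
(`tendsto_mul_log_sin_half`). At `± π` they give `4 π log (cos (a / 2))`.
Finally `g` is integrable across its singularity and `2 π`-periodic, so `∫ g` tends to
`∫_{-π}^{π} g = 2 ∫_0^π log sin = -2 π log 2` (`integral_log_sin_half`), which supplies the
remaining `4 π log 2`.

Since `Real.log` is `log |·|`, absolute values are omitted throughout the formal proof.
-/

lemma intervalIntegrable_log_sin_half (a c d : ℝ) :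
    IntervalIntegrable (fun q => Real.log (Real.sin ((q - a) / 2))) MeasureTheory.volume c d := by
  have h : MeromorphicOn (fun q : ℝ => Real.sin ((q - a) / 2)) (Set.uIcc c d) := by
    apply AnalyticOnNhd.meromorphicOn
    intro x _
    fun_prop
  exact h.intervalIntegrable_log

lemma integral_mul_cot (a c d : ℝ) (h : ∀ q ∈ Set.uIcc c d, Real.sin ((q - a) / 2) ≠ 0) :
    ∫ q in c..d, q * (Real.cos ((q - a) / 2) / Real.sin ((q - a) / 2)) =
      2 * d * Real.log (Real.sin ((d - a) / 2)) - 2 * c * Real.log (Real.sin ((c - a) / 2))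
        - 2 * ∫ q in c..d, Real.log (Real.sin ((q - a) / 2)) := by
  rw [intervalIntegral.integral_mul_deriv_eq_deriv_mul (u := fun q => q) (u' := fun _ => 1)
    (v := fun q => 2 * Real.log (Real.sin ((q - a) / 2)))]
  · simp only [one_mul, intervalIntegral.integral_const_mul]
    ring
  · intro x _
    exact hasDerivAt_id x
  · intro x hx
    have h1 : HasDerivAt (fun q : ℝ => (q - a) / 2) (1 / 2) x :=
      ((hasDerivAt_id x).sub_const a).div_const 2
    convert ((h1.sin).log (h x hx)).const_mul 2 using 1
    ring
  · exact intervalIntegrable_const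
  · apply ContinuousOn.intervalIntegrable
    exact ContinuousOn.div (by fun_prop) (by fun_prop) h

lemma integral_log_sin_half (a : ℝ) :
    ∫ q in (-Real.pi)..Real.pi, Real.log (Real.sin ((q - a) / 2)) =
      -(2 * Real.pi * Real.log 2) := by
  have hper : Function.Periodic (fun x : ℝ => Real.log (Real.sin (x / 2))) (2 * Real.pi) := by
    intro x
    have : (x + 2 * Real.pi) / 2 = x / 2 + Real.pi := by ring
    simp only [this, Real.sin_add_pi, Real.log_neg_eq_log]
  have h1 := hper.intervalIntegral_add_eq (-Real.pi - a) 0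
  rw [intervalIntegral.integral_comp_sub_right (fun x => Real.log (Real.sin (x / 2))) a]
  rw [show -Real.pi - a + 2 * Real.pi = Real.pi - a by ring] at h1
  rw [h1, intervalIntegral.integral_comp_div (fun x => Real.log (Real.sin x)) two_ne_zero]
  rw [zero_div, zero_add, mul_div_cancel_left₀ _ two_ne_zero, integral_log_sin_zero_pi, smul_eq_mul]
  ring

lemma tendsto_mul_log_sin_half :
    Filter.Tendsto (fun ε : ℝ => ε * Real.log (Real.sin (ε / 2)))
      (nhdsWithin 0 (Set.Ioi 0)) (nhds 0) := by
  -- With `y = ε / 2`, split `log (sin y) = log y + log (sinc y)`; `sinc` is continuous, `sinc 0 = 1`.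
  have h1 : Filter.Tendsto (fun ε : ℝ => 2 * ((ε / 2) * Real.log (ε / 2))
      + ε * Real.log (Real.sinc (ε / 2))) (nhds 0) (nhds 0) := by
    have hc : ContinuousAt (fun ε : ℝ => 2 * ((ε / 2) * Real.log (ε / 2))
        + ε * Real.log (Real.sinc (ε / 2))) 0 := by
      have h2 : Continuous (fun ε : ℝ => (ε / 2) * Real.log (ε / 2)) :=
        Real.continuous_mul_log.comp (continuous_id.div_const 2)
      have h3 : ContinuousAt (fun ε : ℝ => Real.sinc (ε / 2)) 0 :=
        (Real.continuous_sinc.comp (continuous_id.div_const 2)).continuousAt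
      exact (h2.continuousAt.const_mul 2).add (continuousAt_id.mul (h3.log (by simp)))
    simpa [ContinuousAt] using hc
  refine (h1.mono_left nhdsWithin_le_nhds).congr' ?_
  filter_upwards [Ioo_mem_nhdsGT Real.pi_pos] with ε hε
  have hpos : 0 < ε / 2 := by linarith [hε.1]
  have hsin : 0 < Real.sin (ε / 2) := Real.sin_pos_of_pos_of_lt_pi hpos (by linarith [hε.1, hε.2])
  rw [Real.sinc_of_ne_zero hpos.ne', Real.log_div hsin.ne' hpos.ne']
  ring

/-- Principal-value evaluation (Appendix D.4 of the paper): for `a ∈ (-π, π)`,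
`p.v. ∫_{-π}^{π} q cot((q-a)/2) dq = 4π log(2 cos(a/2))`, i.e. the symmetric
ε-regularization converges to that value as `ε → 0⁺`. -/
theorem stmt11 (a : ℝ) (ha : a ∈ Set.Ioo (-Real.pi) Real.pi) :
    Filter.Tendsto (fun ε : ℝ =>
        (∫ q in (-Real.pi)..(a - ε), q * (Real.cos ((q - a) / 2) / Real.sin ((q - a) / 2))) +
          ∫ q in (a + ε)..Real.pi, q * (Real.cos ((q - a) / 2) / Real.sin ((q - a) / 2)))
      (nhdsWithin 0 (Set.Ioi 0))
      (nhds (4 * Real.pi * Real.log (2 * Real.cos (a / 2)))) := by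
  obtain ⟨ha1, ha2⟩ := ha
  have hcos : 0 < Real.cos (a / 2) := Real.cos_pos_of_mem_Ioo ⟨by linarith, by linarith⟩
  set G : ℝ → ℝ := fun x => ∫ q in (-Real.pi)..x, Real.log (Real.sin ((q - a) / 2)) with hG
  have hGc : Continuous G :=
    intervalIntegral.continuous_primitive (fun c d => intervalIntegrable_log_sin_half a c d) _
  have hGpi : G Real.pi = -(2 * Real.pi * Real.log 2) := integral_log_sin_half a
  have hlim : Filter.Tendsto (fun ε : ℝ => 4 * Real.pi * Real.log (Real.cos (a / 2))
      - 4 * (ε * Real.log (Real.sin (ε / 2))) - 2 * (G (a - ε) + (G Real.pi - G (a + ε))))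
      (nhdsWithin 0 (Set.Ioi 0)) (nhds (4 * Real.pi * Real.log (2 * Real.cos (a / 2)))) := by
    have h1 : Continuous (fun ε : ℝ => 2 * (G (a - ε) + (G Real.pi - G (a + ε)))) := by fun_prop
    have h2 := ((tendsto_mul_log_sin_half.const_mul 4).const_sub
      (4 * Real.pi * Real.log (Real.cos (a / 2)))).sub ((h1.tendsto 0).mono_left nhdsWithin_le_nhds)
    convert h2 using 2
    rw [Real.log_mul two_ne_zero hcos.ne', hGpi]
    simp only [sub_zero, add_zero]
    ring
  refine hlim.congr' ?_
  have hd : 0 < min (a + Real.pi) (Real.pi - a) := lt_min (by linarith) (by linarith)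
  filter_upwards [Ioo_mem_nhdsGT hd] with ε hε
  obtain ⟨h0, h1⟩ := hε
  obtain ⟨h1, h2⟩ := lt_min_iff.1 h1
  rw [integral_mul_cot, integral_mul_cot]
  · have e1 : Real.log (Real.sin ((a - ε - a) / 2)) = Real.log (Real.sin (ε / 2)) := by
      rw [show (a - ε - a) / 2 = -(ε / 2) by ring, Real.sin_neg, Real.log_neg_eq_log]
    have e2 : Real.log (Real.sin ((a + ε - a) / 2)) = Real.log (Real.sin (ε / 2)) := by
      rw [add_sub_cancel_left]
    have e3 : Real.log (Real.sin ((-Real.pi - a) / 2)) = Real.log (Real.cos (a / 2)) := by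
      rw [show (-Real.pi - a) / 2 = -(a / 2 + Real.pi / 2) by ring, Real.sin_neg,
        Real.log_neg_eq_log, Real.sin_add_pi_div_two]
    have e4 : Real.log (Real.sin ((Real.pi - a) / 2)) = Real.log (Real.cos (a / 2)) := by
      rw [show (Real.pi - a) / 2 = Real.pi / 2 - a / 2 by ring, Real.sin_pi_div_two_sub]
    have e5 : ∫ q in (a + ε)..Real.pi, Real.log (Real.sin ((q - a) / 2))
        = G Real.pi - G (a + ε) :=
      (intervalIntegral.integral_interval_sub_left (intervalIntegrable_log_sin_half a _ _)
        (intervalIntegrable_log_sin_half a _ _)).symm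
    rw [e1, e2, e3, e4, e5]
    simp only [hG]
    ring
  · intro q hq
    rw [Set.uIcc_of_le (by linarith)] at hq
    exact (Real.sin_pos_of_pos_of_lt_pi (by linarith [hq.1]) (by linarith [hq.2])).ne'
  · intro q hq
    rw [Set.uIcc_of_le (by linarith)] at hq
    exact (Real.sin_neg_of_neg_of_neg_pi_lt (by linarith [hq.2]) (by linarith [hq.1])).ne
end

section
/- Let ν : ℝ → ℂ be continuously differentiable on [−π, π] and let k ∈ (−π, π). Suppose the principal value P = lim_{ε→0⁺} [∫_{−π}^{k−ε} ν(q) cot((q−k)/2) dq + ∫_{k+ε}^{π} ν(q) cot((q−k)/2) dq] exists. Then the limit lim_{ε→0⁺} ∫_{−π}^{π} ν(q) cot((q−k+iε)/2) dq exists and equals P − 2πi·ν(k); equivalently, P = lim_{ε→0⁺} ∫_{−π}^{π} ν(q) cot((q−k+iε)/2) dq + 2πi·ν(k). -/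
/-!
Write `ν q = (ν q - ν k) + ν k`. The first part vanishes at `k` to first order, since `ν` is
Lipschitz on `[-π, π]`, so its product with the kernel `cot ((q - k + iε) / 2)` is bounded uniformly
in `q` and `ε ∈ [0, 1]` (`exists_bound`). Dominated convergence then lets `ε → 0` in the regularised
integral (`tendsto_integral_sub_mul`), and the truncated integrals converge to the same value
`∫ (ν q - ν k) cot ((q - k) / 2)` (`tendsto_integral_truncated`).

For the constant part everything is explicit: the symmetrically truncated integral of
`cot ((q - k) / 2)` is exactly `0` (`integral_latticeCot_zero_symm`), while the integral of
`cot ((q - k + iε) / 2)` over the period is exactly `-2πi` for every `ε > 0`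
(`integral_latticeCot`). Thus `P` is the common limit of the first part, and the difference between
the two limits is `-2πi ν k`. -/

open MeasureTheory Set Filter Topology

/-! ### The kernel and its bounds -/

/-- The regularised lattice kernel `q ↦ cot ((q - k + iε) / 2)`, written as `cos / sin`; at
its poles, such as `ε = 0`, `q = k`, it takes the junk value `0`. -/
noncomputable def latticeCot (k ε q : ℝ) : ℂ :=
  Complex.cos (((q : ℂ) - (k : ℂ) + Complex.I * (ε : ℂ)) / 2) /
    Complex.sin (((q : ℂ) - (k : ℂ) + Complex.I * (ε : ℂ)) / 2)

lemma latticeCot_zero (k q : ℝ) : latticeCot k 0 q =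
    Complex.cos (((q : ℂ) - (k : ℂ)) / 2) / Complex.sin (((q : ℂ) - (k : ℂ)) / 2) := by
  simp [latticeCot]

lemma latticeCot_zero_ofReal (k q : ℝ) :
    latticeCot k 0 q = ((Real.cos ((q - k) / 2) / Real.sin ((q - k) / 2) : ℝ) : ℂ) := by
  rw [latticeCot_zero]; push_cast; rfl

lemma half_arg_eq (k ε q : ℝ) : ((q : ℂ) - (k : ℂ) + Complex.I * (ε : ℂ)) / 2 =
    (((q - k) / 2 : ℝ) : ℂ) + ((ε / 2 : ℝ) : ℂ) * Complex.I := by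
  push_cast; ring

lemma abs_sin_le_norm_sin (k ε q : ℝ) : |Real.sin ((q - k) / 2)| ≤
    ‖Complex.sin (((q : ℂ) - (k : ℂ) + Complex.I * (ε : ℂ)) / 2)‖ := by
  rw [half_arg_eq, Complex.sin_add_mul_I]
  refine le_trans ?_ (Complex.abs_re_le_norm _)
  have : (Complex.sin (((q - k) / 2 : ℝ) : ℂ) * Complex.cosh ((ε / 2 : ℝ) : ℂ) +
      Complex.cos (((q - k) / 2 : ℝ) : ℂ) * Complex.sinh ((ε / 2 : ℝ) : ℂ) * Complex.I).re =
      Real.sin ((q - k) / 2) * Real.cosh (ε / 2) := by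
    rw [← Complex.ofReal_sin, ← Complex.ofReal_cos, ← Complex.ofReal_sinh, ← Complex.ofReal_cosh]
    simp [-Complex.ofReal_sin, -Complex.ofReal_cos, -Complex.ofReal_sinh, -Complex.ofReal_cosh]
  rw [this, abs_mul]
  exact le_mul_of_one_le_right (abs_nonneg _) ((Real.one_le_cosh _).trans (le_abs_self _))

lemma norm_cos_le_exp_one (k q : ℝ) {ε : ℝ} (h0 : 0 ≤ ε) (h1 : ε ≤ 1) :
    ‖Complex.cos (((q : ℂ) - (k : ℂ) + Complex.I * (ε : ℂ)) / 2)‖ ≤ Real.exp 1 := by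
  rw [half_arg_eq, Complex.cos, norm_div, Complex.norm_ofNat, div_le_iff₀ two_pos]
  refine (norm_add_le _ _).trans ?_
  rw [Complex.norm_exp, Complex.norm_exp]
  have e1 := Real.exp_le_exp.2 (show -(ε / 2) ≤ 1 by linarith)
  have e2 := Real.exp_le_exp.2 (show ε / 2 ≤ 1 by linarith)
  have r1 : ((((q - k) / 2 : ℝ) : ℂ) + ((ε / 2 : ℝ) : ℂ) * Complex.I).im = ε / 2 := by
    rw [Complex.add_im, Complex.im_ofReal_mul, Complex.ofReal_im, Complex.I_im]; ring
  rw [neg_mul, Complex.neg_re, Complex.mul_I_re, r1, neg_neg]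
  linarith

/-- The zero of `sin ((q - k) / 2)` at `q = k` is simple, and is the only one on `[-π, π]`. -/
lemma exists_mul_abs_le_abs_sin {k : ℝ} (hk : k ∈ Ioo (-Real.pi) Real.pi) :
    ∃ c > 0, ∀ q ∈ Icc (-Real.pi) Real.pi, c * |q - k| ≤ |Real.sin ((q - k) / 2)| := by
  have hcont : ContinuousOn (fun q : ℝ => |Real.sinc ((q - k) / 2)|) (Icc (-Real.pi) Real.pi) :=
    (Real.continuous_sinc.comp (by fun_prop : Continuous fun q : ℝ => (q - k) / 2)).abs.continuousOn
  obtain ⟨p, hp, hmin⟩ := isCompact_Icc.exists_isMinOn ⟨k, hk.1.le, hk.2.le⟩ hcont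
  refine ⟨|Real.sinc ((p - k) / 2)| / 2, ?_, fun q hq => ?_⟩
  · have : Real.sinc ((p - k) / 2) ≠ 0 := by
      by_cases h : (p - k) / 2 = 0
      · simp [h]
      · rw [Real.sinc_of_ne_zero h]
        refine div_ne_zero (fun hs => h ?_) h
        refine (Real.sin_eq_zero_iff_of_lt_of_lt ?_ ?_).1 hs <;>
          linarith [hk.1, hk.2, hp.1, hp.2]
    positivity
  · have h1 : |Real.sinc ((p - k) / 2)| ≤ |Real.sinc ((q - k) / 2)| := hmin hq
    by_cases h : (q - k) / 2 = 0
    · have : q - k = 0 := by linarith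
      simp [this]
    · rw [Real.sinc_of_ne_zero h, abs_div, le_div_iff₀ (abs_pos.2 h), abs_div, abs_two] at h1
      linarith

lemma measurable_latticeCot (k ε : ℝ) : Measurable (latticeCot k ε) := by
  unfold latticeCot
  exact Measurable.div (by fun_prop) (by fun_prop)

/-! ### The integral of the regularised kernel over a period -/

/-- For `ε > 0` the kernel has no pole, and equals `-i (1 + w) / (1 - w)` with
`w = exp (i (q - k + iε))` in the open unit disc. -/
lemma latticeCot_eq (k q : ℝ) {ε : ℝ} (hε : 0 < ε) :
    ‖Complex.exp (Complex.I * ((q : ℂ) - k + Complex.I * ε))‖ < 1 ∧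
    Complex.sin (((q : ℂ) - (k : ℂ) + Complex.I * (ε : ℂ)) / 2) ≠ 0 ∧
    latticeCot k ε q = -Complex.I *
      (1 + Complex.exp (Complex.I * ((q : ℂ) - k + Complex.I * ε))) /
      (1 - Complex.exp (Complex.I * ((q : ℂ) - k + Complex.I * ε))) := by
  have hw : ‖Complex.exp (Complex.I * ((q : ℂ) - k + Complex.I * ε))‖ < 1 := by
    rw [Complex.norm_exp, Real.exp_lt_one_iff]
    simp [hε]
  unfold latticeCot
  set z := ((q : ℂ) - k + Complex.I * ε) / 2 with hz
  have hwz : Complex.exp (Complex.I * ((q : ℂ) - k + Complex.I * ε)) =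
      Complex.exp (z * Complex.I) ^ 2 := by
    rw [← Complex.exp_nat_mul, hz]; congr 1; push_cast; ring
  rw [hwz] at hw ⊢
  have hu := Complex.exp_ne_zero (z * Complex.I)
  have hs : Complex.sin z = (1 - Complex.exp (z * Complex.I) ^ 2) * Complex.I /
      (2 * Complex.exp (z * Complex.I)) := by
    rw [Complex.sin, neg_mul, Complex.exp_neg]; field_simp
  have hc : Complex.cos z = (1 + Complex.exp (z * Complex.I) ^ 2) /
      (2 * Complex.exp (z * Complex.I)) := by
    rw [Complex.cos, neg_mul, Complex.exp_neg]; field_simp; ring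
  have h1 : 1 - Complex.exp (z * Complex.I) ^ 2 ≠ 0 := by
    intro h
    rw [← sub_eq_zero.1 h] at hw
    simp at hw
  refine ⟨hw, ?_, ?_⟩
  · rw [hs]
    exact div_ne_zero (mul_ne_zero h1 Complex.I_ne_zero) (by simp)
  · rw [hs, hc]
    field_simp
    simp

lemma continuous_latticeCot (k : ℝ) {ε : ℝ} (hε : 0 < ε) : Continuous (latticeCot k ε) := by
  unfold latticeCot
  exact Continuous.div (by fun_prop) (by fun_prop) fun q => (latticeCot_eq k q hε).2.1

/-- Over a full period the antiderivative `-i q + 2 log (1 - w)` changes only through its linear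
term, since `w` is `2π`-periodic and `1 - w` stays in the domain of the principal logarithm. -/
lemma integral_latticeCot (k : ℝ) {ε : ℝ} (hε : 0 < ε) :
    ∫ q in (-Real.pi)..Real.pi, latticeCot k ε q = -(2 * (Real.pi : ℂ) * Complex.I) := by
  have hd : ∀ q ∈ uIcc (-Real.pi) Real.pi, HasDerivAt (fun q : ℝ => -Complex.I * (q : ℂ) +
      2 * Complex.log (1 - Complex.exp (Complex.I * ((q : ℂ) - k + Complex.I * ε))))
      (latticeCot k ε q) q := by
    intro q _
    obtain ⟨hw, -, he⟩ := latticeCot_eq k q hε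
    have hslit : 1 - Complex.exp (Complex.I * ((q : ℂ) - k + Complex.I * ε)) ∈
        Complex.slitPlane := by
      simpa [sub_eq_add_neg] using Complex.mem_slitPlane_of_norm_lt_one
        (z := -Complex.exp (Complex.I * ((q : ℂ) - k + Complex.I * ε))) (by rwa [norm_neg])
    have h0 : HasDerivAt (fun q : ℝ => (q : ℂ)) 1 q := Complex.ofRealCLM.hasDerivAt
    have hin := ((((h0.sub_const (k : ℂ)).add_const (Complex.I * ε)).const_mul
      Complex.I).cexp).const_sub 1
    have := (h0.const_mul (-Complex.I)).add ((hin.clog_real hslit).const_mul 2)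
    refine this.congr_deriv ?_
    rw [he]
    have := Complex.slitPlane_ne_zero hslit
    field_simp
    ring
  rw [intervalIntegral.integral_eq_sub_of_hasDerivAt hd
    ((continuous_latticeCot k hε).intervalIntegrable _ _)]
  have hper : Complex.exp (Complex.I * (((Real.pi : ℝ) : ℂ) - k + Complex.I * ε)) =
      Complex.exp (Complex.I * (((-Real.pi : ℝ) : ℂ) - k + Complex.I * ε)) := by
    rw [Complex.exp_eq_exp_iff_exists_int]
    exact ⟨1, by push_cast; ring⟩
  rw [hper]
  push_cast
  ring

/-! ### The principal value of the kernel -/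

lemma sin_half_ne_zero {k q : ℝ} (hk : k ∈ Ioo (-Real.pi) Real.pi)
    (hq : q ∈ Icc (-Real.pi) Real.pi) (hqk : q ≠ k) : Real.sin ((q - k) / 2) ≠ 0 := by
  obtain ⟨c, hc, h⟩ := exists_mul_abs_le_abs_sin hk
  have := sub_ne_zero.2 hqk
  exact abs_pos.1 (lt_of_lt_of_le (by positivity) (h q hq))

lemma continuousOn_latticeCot_zero {k : ℝ} (hk : k ∈ Ioo (-Real.pi) Real.pi) {a b : ℝ}
    (hab : uIcc a b ⊆ Icc (-Real.pi) Real.pi) (hkab : k ∉ uIcc a b) :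
    ContinuousOn (latticeCot k 0) (uIcc a b) := by
  have : latticeCot k 0 =
      fun q => ((Real.cos ((q - k) / 2) / Real.sin ((q - k) / 2) : ℝ) : ℂ) :=
    funext (latticeCot_zero_ofReal k)
  rw [this]
  refine Complex.continuous_ofReal.comp_continuousOn (ContinuousOn.div (by fun_prop) (by fun_prop)
    fun q hq => sin_half_ne_zero hk (hab hq) ?_)
  rintro rfl
  exact hkab hq

/-- `Real.log x` means `log |x|`, so the same antiderivative serves on both sides of the pole. -/
lemma integral_latticeCot_zero {k : ℝ} (hk : k ∈ Ioo (-Real.pi) Real.pi) {a b : ℝ}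
    (hab : uIcc a b ⊆ Icc (-Real.pi) Real.pi) (hkab : k ∉ uIcc a b) :
    ∫ q in a..b, latticeCot k 0 q = ((2 * Real.log (Real.sin ((b - k) / 2)) -
      2 * Real.log (Real.sin ((a - k) / 2)) : ℝ) : ℂ) := by
  have hint := (continuousOn_latticeCot_zero hk hab hkab).intervalIntegrable (μ := volume)
  simp_rw [latticeCot_zero_ofReal]
  rw [intervalIntegral.integral_ofReal]
  congr 1
  refine intervalIntegral.integral_eq_sub_of_hasDerivAt
    (f := fun q => 2 * Real.log (Real.sin ((q - k) / 2))) (fun q hq => ?_) ?_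
  · have hs := sin_half_ne_zero hk (hab hq) (by rintro rfl; exact hkab hq)
    have := (((((hasDerivAt_id q).sub_const k).div_const 2).sin).log hs).const_mul 2
    refine this.congr_deriv ?_
    simp only [id]
    field_simp
  · refine ContinuousOn.intervalIntegrable (ContinuousOn.div (by fun_prop) (by fun_prop)
      fun q hq => sin_half_ne_zero hk (hab hq) ?_)
    rintro rfl
    exact hkab hq

/-- The principal value of the constant function vanishes, even before the limit: the boundary
terms at `k ± ε` cancel by oddness of `sin`, those at `±π` because
`|sin ((π - k) / 2)| = |sin ((-π - k) / 2)| = |cos (k / 2)|`. -/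
lemma integral_latticeCot_zero_symm {k : ℝ} (hk : k ∈ Ioo (-Real.pi) Real.pi) {ε : ℝ} (hε : 0 < ε)
    (h1 : -Real.pi ≤ k - ε) (h2 : k + ε ≤ Real.pi) :
    (∫ q in (-Real.pi)..(k - ε), latticeCot k 0 q) + ∫ q in (k + ε)..Real.pi, latticeCot k 0 q
      = 0 := by
  rw [integral_latticeCot_zero hk, integral_latticeCot_zero hk, ← Complex.ofReal_add]
  · have e1 : Real.sin ((k - ε - k) / 2) = -Real.sin ((k + ε - k) / 2) := by
      rw [← Real.sin_neg]; ring_nf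
    have e2 : Real.sin ((Real.pi - k) / 2) = Real.cos (k / 2) := by
      rw [← Real.sin_pi_div_two_sub]; ring_nf
    have e3 : Real.sin ((-Real.pi - k) / 2) = -Real.cos (k / 2) := by
      rw [← Real.cos_neg, ← Real.sin_pi_div_two_sub, ← Real.sin_neg]; ring_nf
    rw [e1, e2, e3, Real.log_neg_eq_log, Real.log_neg_eq_log]
    norm_num
  · rw [uIcc_of_le h2]; exact Icc_subset_Icc (by linarith [hk.1]) le_rfl
  · rw [uIcc_of_le h2]; exact fun h => by linarith [h.1]
  · rw [uIcc_of_le h1]; exact Icc_subset_Icc le_rfl (by linarith [hk.2])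
  · rw [uIcc_of_le h1]; exact fun h => by linarith [h.2]

/-! ### The part vanishing at the pole -/

/-- Subtracting `ν k` cancels the pole of the kernel, uniformly in `ε ∈ [0, 1]`. This is the only
place where the differentiability of `ν` enters, through its Lipschitz constant. -/
lemma exists_bound {ν : ℝ → ℂ} (hν : ContDiffOn ℝ 1 ν (Icc (-Real.pi) Real.pi))
    {k : ℝ} (hk : k ∈ Ioo (-Real.pi) Real.pi) :
    ∃ M : ℝ, ∀ ε, 0 ≤ ε → ε ≤ 1 → ∀ q ∈ Icc (-Real.pi) Real.pi,
      ‖(ν q - ν k) * latticeCot k ε q‖ ≤ M := by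
  obtain ⟨L, hL⟩ := hν.exists_lipschitzOnWith one_ne_zero (convex_Icc _ _) isCompact_Icc
  obtain ⟨c, hc, hsin⟩ := exists_mul_abs_le_abs_sin hk
  refine ⟨L * Real.exp 1 / c, fun ε h0 h1 q hq => ?_⟩
  by_cases hqk : q = k
  · subst hqk
    simp only [sub_self, zero_mul, norm_zero]
    positivity
  have hlip : ‖ν q - ν k‖ ≤ L * |q - k| := by
    simpa [dist_eq_norm] using hL.dist_le_mul q hq k ⟨hk.1.le, hk.2.le⟩
  have hpos : 0 < |q - k| := abs_pos.2 (sub_ne_zero.2 hqk)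
  have hs := (hsin q hq).trans (abs_sin_le_norm_sin k ε q)
  calc ‖(ν q - ν k) * latticeCot k ε q‖
      ≤ (L * |q - k|) * (Real.exp 1 / (c * |q - k|)) := by
        rw [norm_mul, latticeCot, norm_div]
        gcongr
        exact norm_cos_le_exp_one k q h0 h1
    _ = L * Real.exp 1 / c := by field_simp

lemma aestronglyMeasurable_sub_mul {ν : ℝ → ℂ} (hν : ContinuousOn ν (Icc (-Real.pi) Real.pi))
    (k ε : ℝ) : AEStronglyMeasurable (fun q => (ν q - ν k) * latticeCot k ε q)
      (volume.restrict (Icc (-Real.pi) Real.pi)) :=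
  ((hν.sub continuousOn_const).aestronglyMeasurable measurableSet_Icc).mul
    (measurable_latticeCot k ε).aestronglyMeasurable

lemma intervalIntegrable_sub_mul {ν : ℝ → ℂ} (hν : ContDiffOn ℝ 1 ν (Icc (-Real.pi) Real.pi))
    {k : ℝ} (hk : k ∈ Ioo (-Real.pi) Real.pi) {ε : ℝ} (h0 : 0 ≤ ε) (h1 : ε ≤ 1) :
    IntervalIntegrable (fun q => (ν q - ν k) * latticeCot k ε q) volume (-Real.pi) Real.pi := by
  obtain ⟨M, hM⟩ := exists_bound hν hk
  rw [intervalIntegrable_iff_integrableOn_Icc_of_le (by linarith [Real.pi_pos])]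
  refine ⟨aestronglyMeasurable_sub_mul hν.continuousOn k ε, ?_⟩
  refine HasFiniteIntegral.restrict_of_bounded M measure_Icc_lt_top ?_
  filter_upwards [ae_restrict_mem measurableSet_Icc] with q hq using hM ε h0 h1 q hq

lemma tendsto_integral_sub_mul {ν : ℝ → ℂ} (hν : ContDiffOn ℝ 1 ν (Icc (-Real.pi) Real.pi))
    {k : ℝ} (hk : k ∈ Ioo (-Real.pi) Real.pi) :
    Tendsto (fun ε : ℝ => ∫ q in (-Real.pi)..Real.pi, (ν q - ν k) * latticeCot k ε q)
      (𝓝[>] 0) (𝓝 (∫ q in (-Real.pi)..Real.pi, (ν q - ν k) * latticeCot k 0 q)) := by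
  obtain ⟨M, hM⟩ := exists_bound hν hk
  have hle : -Real.pi ≤ Real.pi := by linarith [Real.pi_pos]
  have hsub : uIoc (-Real.pi) Real.pi ⊆ Icc (-Real.pi) Real.pi := by
    rw [uIoc_of_le hle]; exact Ioc_subset_Icc_self
  refine intervalIntegral.tendsto_integral_filter_of_dominated_convergence (fun _ => M) ?_ ?_ ?_ ?_
  · exact Eventually.of_forall fun ε =>
      (aestronglyMeasurable_sub_mul hν.continuousOn k ε).mono_measure
        (Measure.restrict_mono hsub le_rfl)
  · filter_upwards [Ioo_mem_nhdsGT (zero_lt_one' ℝ)] with ε hε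
    exact Eventually.of_forall fun q hq => hM ε hε.1.le hε.2.le q (hsub hq)
  · simp
  · refine Eventually.of_forall fun q hq => ?_
    by_cases hqk : q = k
    · subst hqk; simp
    · refine Tendsto.const_mul _ (Tendsto.mono_left ?_ nhdsWithin_le_nhds)
      have hs : Complex.sin (((q : ℂ) - (k : ℂ) + Complex.I * ((0 : ℝ) : ℂ)) / 2) ≠ 0 :=
        norm_pos_iff.1 ((abs_pos.2 (sin_half_ne_zero hk (hsub hq) hqk)).trans_le
          (abs_sin_le_norm_sin k 0 q))
      have : ContinuousAt (fun ε : ℝ => latticeCot k ε q) 0 := by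
        unfold latticeCot
        exact ContinuousAt.div (by fun_prop) (by fun_prop) hs
      exact this.tendsto

lemma tendsto_integral_truncated {f : ℝ → ℂ} {k : ℝ} (hk : k ∈ Ioo (-Real.pi) Real.pi)
    (hf : IntervalIntegrable f volume (-Real.pi) Real.pi) :
    Tendsto (fun ε : ℝ => (∫ q in (-Real.pi)..(k - ε), f q) + ∫ q in (k + ε)..Real.pi, f q)
      (𝓝[>] 0) (𝓝 (∫ q in (-Real.pi)..Real.pi, f q)) := by
  have hle : -Real.pi ≤ Real.pi := by linarith [Real.pi_pos]
  have hkm : k ∈ uIcc (-Real.pi) Real.pi := by rw [uIcc_of_le hle]; exact ⟨hk.1.le, hk.2.le⟩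
  have hnhds : uIcc (-Real.pi) Real.pi ∈ 𝓝 k := by
    rw [uIcc_of_le hle]; exact Icc_mem_nhds hk.1 hk.2
  have hl := (intervalIntegral.continuousOn_primitive_interval' hf left_mem_uIcc).continuousAt hnhds
  have hr := (intervalIntegral.continuousOn_primitive_interval' hf
    right_mem_uIcc).continuousAt hnhds
  have tl : Tendsto (fun ε : ℝ => k - ε) (𝓝[>] 0) (𝓝 k) := by
    have : ContinuousAt (fun ε : ℝ => k - ε) 0 := by fun_prop
    simpa using this.tendsto.mono_left nhdsWithin_le_nhds
  have tr : Tendsto (fun ε : ℝ => k + ε) (𝓝[>] 0) (𝓝 k) := by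
    have : ContinuousAt (fun ε : ℝ => k + ε) 0 := by fun_prop
    simpa using this.tendsto.mono_left nhdsWithin_le_nhds
  have := (hl.tendsto.comp tl).sub (hr.tendsto.comp tr)
  have hadd : (∫ q in (-Real.pi)..k, f q) - ∫ q in Real.pi..k, f q =
      ∫ q in (-Real.pi)..Real.pi, f q := by
    rw [intervalIntegral.integral_symm k Real.pi, sub_neg_eq_add]
    exact intervalIntegral.integral_add_adjacent_intervals
      (hf.mono_set (uIcc_subset_uIcc left_mem_uIcc hkm))
      (hf.mono_set (uIcc_subset_uIcc hkm right_mem_uIcc))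
  rw [hadd] at this
  refine this.congr fun ε => ?_
  simp only [Function.comp]
  rw [intervalIntegral.integral_symm (k + ε) Real.pi, sub_neg_eq_add]


/-! ### The lattice Sokhotski–Plemelj formula -/

/-- Lattice Sokhotski–Plemelj formula (Eq. (sp) of the paper): if `ν` is `C¹` on
`[-π, π]`, `k ∈ (-π, π)`, and the principal value
`P = lim_{ε→0⁺} [∫_{-π}^{k-ε} + ∫_{k+ε}^{π}] ν(q) cot((q-k)/2) dq` exists, then
`lim_{ε→0⁺} ∫_{-π}^{π} ν(q) cot((q-k+iε)/2) dq = P - 2πi ν(k)`. -/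
theorem stmt12 (ν : ℝ → ℂ) (hν : ContDiffOn ℝ 1 ν (Set.Icc (-Real.pi) Real.pi))
    (k : ℝ) (hk : k ∈ Set.Ioo (-Real.pi) Real.pi) (P : ℂ)
    (hP : Filter.Tendsto (fun ε : ℝ =>
        (∫ q in (-Real.pi)..(k - ε),
            ν q * (Complex.cos (((q : ℂ) - (k : ℂ)) / 2) / Complex.sin (((q : ℂ) - (k : ℂ)) / 2))) +
          ∫ q in (k + ε)..Real.pi,
            ν q * (Complex.cos (((q : ℂ) - (k : ℂ)) / 2) / Complex.sin (((q : ℂ) - (k : ℂ)) / 2)))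
      (nhdsWithin 0 (Set.Ioi 0)) (nhds P)) :
    Filter.Tendsto (fun ε : ℝ =>
        ∫ q in (-Real.pi)..Real.pi,
          ν q * (Complex.cos (((q : ℂ) - (k : ℂ) + Complex.I * (ε : ℂ)) / 2) /
            Complex.sin (((q : ℂ) - (k : ℂ) + Complex.I * (ε : ℂ)) / 2)))
      (nhdsWithin 0 (Set.Ioi 0))
      (nhds (P - 2 * (Real.pi : ℂ) * Complex.I * ν k)) := by
  simp_rw [← latticeCot_zero] at hP
  change Tendsto (fun ε : ℝ => ∫ q in (-Real.pi)..Real.pi, ν q * latticeCot k ε q) _ _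
  have hf := intervalIntegrable_sub_mul hν hk le_rfl zero_le_one
  have hle : -Real.pi ≤ Real.pi := by linarith [Real.pi_pos]
  have hPeq : P = ∫ q in (-Real.pi)..Real.pi, (ν q - ν k) * latticeCot k 0 q := by
    refine tendsto_nhds_unique hP ((tendsto_integral_truncated hk hf).congr' ?_)
    filter_upwards [Ioo_mem_nhdsGT (show (0 : ℝ) < min (k + Real.pi) (Real.pi - k) from
      lt_min (by linarith [hk.1]) (by linarith [hk.2]))] with ε hε
    have h1 : -Real.pi ≤ k - ε := by linarith [hε.2.trans_le (min_le_left _ _)]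
    have h2 : k + ε ≤ Real.pi := by linarith [hε.2.trans_le (min_le_right _ _)]
    have hε0 : 0 < ε := hε.1
    have split : ∀ a b : ℝ, uIcc a b ⊆ Icc (-Real.pi) Real.pi → k ∉ uIcc a b →
        ∫ q in a..b, ν q * latticeCot k 0 q = (∫ q in a..b, (ν q - ν k) * latticeCot k 0 q) +
          ν k * ∫ q in a..b, latticeCot k 0 q := by
      intro a b hab hkab
      have hc := continuousOn_latticeCot_zero hk hab hkab
      rw [← intervalIntegral.integral_const_mul, ← intervalIntegral.integral_add]
      · congr 1; ext q; ring
      · exact hf.mono_set (by rwa [uIcc_of_le hle])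
      · exact (continuousOn_const.mul hc).intervalIntegrable
    rw [split, split]
    · linear_combination -(ν k) * integral_latticeCot_zero_symm hk hε0 h1 h2
    · rw [uIcc_of_le h2]; exact Icc_subset_Icc (by linarith [hk.1]) le_rfl
    · rw [uIcc_of_le h2]; exact fun h => by linarith [h.1]
    · rw [uIcc_of_le h1]; exact Icc_subset_Icc le_rfl (by linarith [hk.2])
    · rw [uIcc_of_le h1]; exact fun h => by linarith [h.2]
  have hlim := (tendsto_integral_sub_mul hν hk).sub_const (2 * (Real.pi : ℂ) * Complex.I * ν k)
  rw [← hPeq] at hlim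
  refine hlim.congr' ?_
  filter_upwards [Ioo_mem_nhdsGT (zero_lt_one' ℝ)] with ε hε
  have hc : IntervalIntegrable (fun q => ν k * latticeCot k ε q) volume (-Real.pi) Real.pi :=
    (continuous_const.mul (continuous_latticeCot k hε.1)).intervalIntegrable _ _
  have hsplit : ∫ q in (-Real.pi)..Real.pi, ν q * latticeCot k ε q =
      (∫ q in (-Real.pi)..Real.pi, (ν q - ν k) * latticeCot k ε q) +
        ∫ q in (-Real.pi)..Real.pi, ν k * latticeCot k ε q := by
    rw [← intervalIntegral.integral_add (intervalIntegrable_sub_mul hν hk hε.1.le hε.2.le) hc]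
    congr 1; ext q; ring
  rw [hsplit, intervalIntegral.integral_const_mul, integral_latticeCot k hε.1]
  ring
end

section
/- Let x ≥ 1 be an integer, c : ℤ → ℂ a sequence, and α ∈ ℂ. Let M(α) be the x×x complex matrix, with rows and columns indexed by 0, 1, …, x−1, defined by M(α)_{0,m} = c_{−m} − α·c_{x−m} for the first row and M(α)_{n,m} = c_{n−m} for rows n ≥ 1. Then det M(α) = det M(0) + α · det T̃, where T̃ is the x×x Toeplitz matrix with entries T̃_{n,m} = −c_{n−m+1} for 0 ≤ n, m ≤ x−1. -/
/-!
The determinant is affine in its first row, so `det M(α) = det M(0) + α det B`, where `B` is `M(0)`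
with its first row replaced by `-c_{x-m}`. Moving the first row of `B` to the bottom (a cyclic
permutation of sign `(-1)^{x-1}`) and negating the other `x - 1` rows turns `B` into `T̃`; the
two signs cancel, so `det B = det T̃`.
-/

/-- Moving the first row of a matrix to the bottom and negating all the other rows preserves
the determinant. -/
lemma det_eq_of_rotate_neg {k : ℕ} (B T : Matrix (Fin (k + 1)) (Fin (k + 1)) ℂ)
    (hlast : ∀ m, T (Fin.last k) m = B 0 m)
    (hcast : ∀ (i : Fin k) m, T i.castSucc m = -B i.succ m) :
    T.det = B.det := by
  have hT : T = Matrix.of fun i j =>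
      (Fin.lastCases (motive := fun _ => ℂ) 1 (fun _ => -1) i : ℂ) *
        (B.submatrix (finRotate (k + 1)) id) i j := by
    ext i j
    refine Fin.lastCases ?_ (fun i => ?_) i
    · simp [hlast]
    · simp [hcast]
  rw [hT, Matrix.det_mul_column, Matrix.det_permute, sign_finRotate, Fin.prod_univ_castSucc]
  simp [← mul_assoc, ← mul_pow]

/-- Toeplitz-determinant identity (Sec. 5 of the paper): with `M(α)` the `x×x`
matrix whose first row is `c_{-m} - α c_{x-m}` and whose other rows are
`c_{n-m}`, one has `det M(α) = det M(0) + α det T̃` where `T̃_{n,m} = -c_{n-m+1}`. -/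
theorem stmt13 (x : ℕ) (hx : 1 ≤ x) (c : ℤ → ℂ) (α : ℂ)
    (M : ℂ → Matrix (Fin x) (Fin x) ℂ)
    (hM : ∀ (β : ℂ) (n m : Fin x), M β n m =
      if (n : ℕ) = 0 then c (-(m : ℤ)) - β * c ((x : ℤ) - (m : ℤ))
      else c ((n : ℤ) - (m : ℤ)))
    (T : Matrix (Fin x) (Fin x) ℂ)
    (hT : ∀ n m : Fin x, T n m = -c ((n : ℤ) - (m : ℤ) + 1)) :
    (M α).det = (M 0).det + α * T.det := by
  obtain ⟨k, rfl⟩ : ∃ k, x = k + 1 := ⟨x - 1, by omega⟩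
  set v : Fin (k + 1) → ℂ := fun m => -c (((k + 1 : ℕ) : ℤ) - (m : ℤ)) with hv
  have hMα : M α = (M 0).updateRow 0 ((M 0) 0 + α • v) := by
    ext n m
    refine Fin.cases ?_ (fun n => ?_) n
    · simp [hM, hv, sub_eq_add_neg]
    · simp [hM]
  have hTB : T.det = ((M 0).updateRow 0 v).det := by
    apply det_eq_of_rotate_neg
    · intro m
      simp only [hT, hv, Matrix.updateRow_self, Fin.val_last]
      congr 2
      push_cast
      ring
    · intro i m
      simp only [hT, hM, Matrix.updateRow_ne (Fin.succ_ne_zero i), Fin.val_succ, Fin.val_castSucc,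
        Nat.add_eq_zero_iff, one_ne_zero, and_false, if_false]
      congr 2
      push_cast
      ring
  rw [hMα, Matrix.det_updateRow_add, Matrix.det_updateRow_smul, Matrix.updateRow_eq_self, hTB]
end
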